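/- Let α_1,…,α_5 be roots of unity (each ≠ 1) with α_1α_2 = 1 and α_3α_4α_5 = 1, and let ω_1,…,ω_4 be a spanning set of a 3-dimensional space subject to the single relation (1-α_1^{-1})ω_1 + (1-α_3^{-1})ω_3 + (1-α_3^{-1}α_4^{-1})ω_4 = 0, so that ω_3 = -((1-α_1^{-1})/(1-α_3^{-1}))ω_1 - ((1-α_5)/(1-α_3^{-1}))ω_4. Define T_{45} by T_{45}(ω_1)=ω_1, T_{45}(ω_2)=ω_2, T_{45}(ω_4)=α_4α_5ω_4, and T_{34} by T_{34}(ω_1)=ω_1, T_{34}(ω_2)=ω_2+(1-α_4)ω_3, T_{34}(ω_4)=ω_4+(α_4-α_3α_4)ω_3. Then, modulo ω_1, T_{45}(ω_2+λω_4) ≡ ω_2 + α_3^{-1}λ ω_4 and T_{34}(ω_2+λω_4) ≡ ω_2 + (-(1-α_4)(1-α_5)/(1-α_3^{-1}) + α_5^{-1}λ)ω_4. -/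

import Mathlib

/-- Parabolic monodromy at a cusp: with roots of unity α₁,…,α₅ (each ≠ 1),
    α₁α₂ = 1, α₃α₄α₅ = 1, vectors ω₁,…,ω₄ spanning a 3-dimensional space subject to
    the single relation (1-α₁⁻¹)ω₁ + (1-α₃⁻¹)ω₃ + (1-α₃⁻¹α₄⁻¹)ω₄ = 0, and the
    operators T₄₅, T₃₄ defined on ω₁, ω₂, ω₄ as displayed, one has
    ω₃ = -((1-α₁⁻¹)/(1-α₃⁻¹))ω₁ - ((1-α₅)/(1-α₃⁻¹))ω₄ and, modulo ω₁,
    T₄₅(ω₂+λω₄) ≡ ω₂ + α₃⁻¹λω₄ and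
    T₃₄(ω₂+λω₄) ≡ ω₂ + (-(1-α₄)(1-α₅)/(1-α₃⁻¹) + α₅⁻¹λ)ω₄.
    (Indices are 0-based: α i, ω i.) -/
theorem stmt19 (V : Type*) [AddCommGroup V] [Module ℂ V] [FiniteDimensional ℂ V]
    (hdim : Module.finrank ℂ V = 3)
    (α : Fin 5 → ℂ) (hroot : ∀ i, ∃ k : ℕ, 0 < k ∧ α i ^ k = 1)
    (hne : ∀ i, α i ≠ 1)
    (h12 : α 0 * α 1 = 1) (h345 : α 2 * α 3 * α 4 = 1)
    (ω : Fin 4 → V) (hspan : Submodule.span ℂ (Set.range ω) = ⊤)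
    (hrel : (1 - (α 0)⁻¹) • ω 0 + (1 - (α 2)⁻¹) • ω 2 +
        (1 - (α 2)⁻¹ * (α 3)⁻¹) • ω 3 = 0)
    (T45 T34 : V →ₗ[ℂ] V)
    (h45a : T45 (ω 0) = ω 0) (h45b : T45 (ω 1) = ω 1)
    (h45c : T45 (ω 3) = (α 3 * α 4) • ω 3)
    (h34a : T34 (ω 0) = ω 0)
    (h34b : T34 (ω 1) = ω 1 + (1 - α 3) • ω 2)
    (h34c : T34 (ω 3) = ω 3 + (α 3 - α 2 * α 3) • ω 2) :
    ω 2 = (-((1 - (α 0)⁻¹) / (1 - (α 2)⁻¹))) • ω 0 +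
        (-((1 - α 4) / (1 - (α 2)⁻¹))) • ω 3 ∧
    (∀ l : ℂ, T45 (ω 1 + l • ω 3) - (ω 1 + ((α 2)⁻¹ * l) • ω 3) ∈
        Submodule.span ℂ {ω 0}) ∧
    (∀ l : ℂ, T34 (ω 1 + l • ω 3) -
        (ω 1 + (-((1 - α 3) * (1 - α 4)) / (1 - (α 2)⁻¹) + (α 4)⁻¹ * l) • ω 3) ∈
        Submodule.span ℂ {ω 0}) := by
  have n2 : α 2 ≠ 0 := by
    intro h; rw [h] at h345; simp at h345
  have n3 : α 3 ≠ 0 := by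
    intro h; rw [h] at h345; simp at h345
  have n4 : α 4 ≠ 0 := by
    intro h; rw [h] at h345; simp at h345
  have i34 : α 3 * α 4 = (α 2)⁻¹ := by
    apply eq_inv_of_mul_eq_one_left; linear_combination h345
  have i4 : (α 2)⁻¹ * (α 3)⁻¹ = α 4 := by
    rw [← mul_inv]; exact inv_eq_of_mul_eq_one_right h345
  have inv4 : (α 4)⁻¹ = α 2 * α 3 := inv_eq_of_mul_eq_one_left h345
  have nd : 1 - (α 2)⁻¹ ≠ 0 := by
    intro h
    exact hne 2 (inv_eq_one.mp (sub_eq_zero.mp h).symm)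
  rw [i4] at hrel
  have key : ω 2 = (-((1 - (α 0)⁻¹) / (1 - (α 2)⁻¹))) • ω 0 +
      (-((1 - α 4) / (1 - (α 2)⁻¹))) • ω 3 := by
    have h := congrArg (fun v => (1 - (α 2)⁻¹)⁻¹ • v) hrel
    simp only [smul_add, smul_smul, smul_zero, inv_mul_cancel₀ nd, one_smul] at h
    rw [div_eq_inv_mul, div_eq_inv_mul, neg_smul, neg_smul]
    rw [← sub_eq_zero, ← h]
    abel
  refine ⟨key, fun l => ?_, fun l => ?_⟩
  · rw [map_add, map_smul, h45b, h45c, smul_smul, i34, mul_comm l, sub_self]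
    exact Submodule.zero_mem _
  · rw [Submodule.mem_span_singleton]
    have e : (α 3 - α 2 * α 3) / (1 - (α 2)⁻¹) = -(α 2 * α 3) := by
      rw [div_eq_iff nd]
      field_simp
      ring
    refine ⟨((1 - α 3) + l * (α 3 - α 2 * α 3)) * (-((1 - (α 0)⁻¹) / (1 - (α 2)⁻¹))), ?_⟩
    rw [map_add, map_smul, h34b, h34c, key, inv4]
    rw [div_eq_mul_inv] at e
    simp only [div_eq_mul_inv]
    generalize (1 - (α 2)⁻¹)⁻¹ = d at *
    have e2 : α 2 * α 3 * l = l + l * ((α 3 - α 2 * α 3) * (-((1 - α 4) * d))) := by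
      linear_combination (l * (1 - α 4)) * e + l * h345
    rw [e2]
    module
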